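/- Let Y ∈ ℝ^{m×p} and 1 ≤ r ≤ m with σ_r(Y) > σ_{r+1}(Y), and let Y^k ∈ ℝ^{m×p} be a sequence with Y^k → Y as k → ∞. Suppose X ∈ O_{m×r} satisfies the uniqueness conditions for (Y,r). Then there exists an integer k₀ such that for all k ≥ k₀, X satisfies the uniqueness conditions for (Y^k,r), and the unique minimizers T_{Y^k,r}(X) of ‖Z − X‖_F² over H_{Y^k,r} converge to T_{Y,r}(X) as k → ∞. -/

import Mathlib

open Matrix BigOperators Filter

/-- The squared Frobenius norm of a real matrix. -/
def froSq {ι κ : Type*} [Fintype ι] [Fintype κ] (M : Matrix ι κ ℝ) : ℝ :=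
  ∑ i, ∑ j, (M i j) ^ 2

/-- The Frobenius norm of a real matrix. -/
noncomputable def fro {ι κ : Type*} [Fintype ι] [Fintype κ] (M : Matrix ι κ ℝ) : ℝ :=
  Real.sqrt (froSq M)

/-- The eigenvalues of `Y * Yᴴ`, sorted in descending order. -/
noncomputable def eigList {m : ℕ} {κ : Type*} [Fintype κ] (Y : Matrix (Fin m) κ ℝ) : List ℝ :=
  ((((Finset.univ : Finset (Fin m)).val.map
      (fun j => (Matrix.isHermitian_mul_conjTranspose_self Y).eigenvalues j)).sort (· ≤ ·)).reverse)

/-- The `i`-th largest singular value (1-indexed) of a real matrix, with the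
convention that it is `0` beyond the smaller matrix dimension. -/
noncomputable def sval {m : ℕ} {κ : Type*} [Fintype κ] (Y : Matrix (Fin m) κ ℝ) (i : ℕ) : ℝ :=
  Real.sqrt ((eigList Y).getD (i - 1) 0)

/-- The set of `m × r` real matrices with orthonormal columns. -/
def Stiefel (m r : ℕ) : Set (Matrix (Fin m) (Fin r) ℝ) :=
  {Z | Zᵀ * Z = 1}

/-- `H_{Y,r}`: the set of maximizers of `‖Zᵀ Y‖_F²` over the Stiefel manifold. -/
def HSet {m p : ℕ} (Y : Matrix (Fin m) (Fin p) ℝ) (r : ℕ) : Set (Matrix (Fin m) (Fin r) ℝ) :=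
  {Z | Z ∈ Stiefel m r ∧ ∀ W ∈ Stiefel m r, froSq (Wᵀ * Y) ≤ froSq (Zᵀ * Y)}

/-- The nuclear norm: the sum of all singular values. -/
noncomputable def nuclearNorm {a b : ℕ} (M : Matrix (Fin a) (Fin b) ℝ) : ℝ :=
  ∑ i ∈ Finset.range (min a b), sval M (i + 1)

/-- `U` maximizes `‖Uᵀ X‖_*` over `H_{Y,r}`. -/
def NucMax {m p r : ℕ} (Y : Matrix (Fin m) (Fin p) ℝ) (X U : Matrix (Fin m) (Fin r) ℝ) : Prop :=
  U ∈ HSet Y r ∧ ∀ V ∈ HSet Y r, nuclearNorm (Vᵀ * X) ≤ nuclearNorm (Uᵀ * X)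

/-- The uniqueness conditions for `(Y, r)` at `X`. -/
def UniqCond {m p : ℕ} (Y : Matrix (Fin m) (Fin p) ℝ) (r : ℕ)
    (X : Matrix (Fin m) (Fin r) ℝ) : Prop :=
  (∀ U, NucMax Y X U → (Uᵀ * X).det ≠ 0) ∧
  (∀ U₁ U₂, NucMax Y X U₁ → NucMax Y X U₂ → U₁ * U₁ᵀ = U₂ * U₂ᵀ)

/-- `Z` is a minimizer of `‖Z − X‖_F²` over `H_{Y,r}`. -/
def IsProj {m p r : ℕ} (Y : Matrix (Fin m) (Fin p) ℝ) (X Z : Matrix (Fin m) (Fin r) ℝ) : Prop :=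
  Z ∈ HSet Y r ∧ ∀ W ∈ HSet Y r, froSq (Z - X) ≤ froSq (W - X)

/-- The trace inner product of two matrices. -/
noncomputable def tinner {a b : ℕ} (A B : Matrix (Fin a) (Fin b) ℝ) : ℝ :=
  Matrix.trace (Aᵀ * B)

/-!
Column spaces are compared through their orthogonal projections `Z * Zᵀ`. Diagonalizing `Y * Yᵀ`
turns the deficit of `‖Zᵀ Y‖_F²` from its maximum into a sum of nonnegative terms, so under the gap
all maximizers have the same projection. Maximizers over the compact set of orthonormal frames are
upper hemicontinuous in `Y`; since a vanishing gap would produce two maximizers with projections at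
distance at least `1`, the maximizers for a nearby `Y'` also share one projection. Once they do,
`‖Uᵀ X‖_*` is constant on them, and the uniqueness conditions just say that `Uᵀ X` is nonsingular
for all of them, which is an open condition. Finally, by the orthogonal Procrustes problem a closest
maximizer `Z` to `X` has `Zᵀ X` positive semidefinite. This condition is closed and singles out one
maximizer for `Y`, so these closest maximizers converge to it.
-/

open scoped Topology

section FrobeniusNorm

open scoped Matrix.Norms.Frobenius

variable {ι κ α : Type*} [Fintype ι] [Fintype κ]

lemma froSq_nonneg (M : Matrix ι κ ℝ) : 0 ≤ froSq M :=
  Finset.sum_nonneg fun _ _ => Finset.sum_nonneg fun _ _ => sq_nonneg _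

lemma fro_eq_norm (M : Matrix ι κ ℝ) : fro M = ‖M‖ := by
  simp [fro, froSq, frobenius_norm_def, Real.sqrt_eq_rpow]

lemma froSq_eq_norm_sq (M : Matrix ι κ ℝ) : froSq M = ‖M‖ ^ 2 := by
  rw [← fro_eq_norm, fro, Real.sq_sqrt (froSq_nonneg M)]

lemma froSq_eq_zero_iff {M : Matrix ι κ ℝ} : froSq M = 0 ↔ M = 0 := by
  rw [froSq_eq_norm_sq, sq_eq_zero_iff, norm_eq_zero]

lemma continuous_froSq : Continuous (froSq : Matrix ι κ ℝ → ℝ) := by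
  rw [funext froSq_eq_norm_sq]
  exact continuous_norm.pow 2

lemma continuous_fro : Continuous (fro : Matrix ι κ ℝ → ℝ) :=
  Real.continuous_sqrt.comp continuous_froSq

lemma fro_sub_le (A B C : Matrix ι κ ℝ) : fro (A - B) ≤ fro (A - C) + fro (B - C) := by
  simpa only [fro_eq_norm, dist_eq_norm] using dist_triangle_right A B C

lemma tendsto_fro_sub_iff {l : Filter α} {A : α → Matrix ι κ ℝ} {B : Matrix ι κ ℝ} :
    Tendsto (fun k => fro (A k - B)) l (𝓝 0) ↔ Tendsto A l (𝓝 B) := by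
  simp only [fro_eq_norm]
  exact tendsto_iff_norm_sub_tendsto_zero.symm

lemma isCompact_of_isClosed_of_fro_le {K : Set (Matrix ι κ ℝ)} (hK : IsClosed K) {C : ℝ}
    (hC : ∀ M ∈ K, fro M ≤ C) : IsCompact K :=
  Metric.isCompact_of_isClosed_isBounded hK <|
    isBounded_iff_forall_norm_le.2 ⟨C, fun M hM => (fro_eq_norm M).symm.trans_le (hC M hM)⟩

end FrobeniusNorm

lemma froSq_eq_trace {ι κ : Type*} [Fintype ι] [Fintype κ] (M : Matrix ι κ ℝ) :
    froSq M = trace (M * Mᵀ) := by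
  simp only [froSq, trace, diag_apply, mul_apply, transpose_apply, sq]

lemma froSq_eq_trace' {ι κ : Type*} [Fintype ι] [Fintype κ] (M : Matrix ι κ ℝ) :
    froSq M = trace (Mᵀ * M) := by
  rw [froSq_eq_trace, trace_mul_comm]

lemma froSq_sub {ι κ : Type*} [Fintype ι] [Fintype κ] (A B : Matrix ι κ ℝ) :
    froSq (A - B) = froSq A + froSq B - 2 * trace (Aᵀ * B) := by
  have hcomm : trace (Bᵀ * A) = trace (Aᵀ * B) := by
    rw [← trace_transpose, transpose_mul, transpose_transpose]
  simp only [froSq_eq_trace', transpose_sub, Matrix.sub_mul, Matrix.mul_sub, trace_sub, hcomm]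
  ring

lemma eventually_isMaxOn_mem {α β γ : Type*} [TopologicalSpace α] [TopologicalSpace β]
    [TopologicalSpace γ] [LinearOrder γ] [OrderClosedTopology γ] {K : Set β} (hK : IsCompact K)
    {f : α → β → γ} (hf : Continuous f.uncurry) {O : Set β} (hO : IsOpen O) {a : α}
    (h : ∀ x ∈ K, IsMaxOn (f a) K x → x ∈ O) :
    ∀ᶠ a' in 𝓝 a, ∀ x ∈ K, IsMaxOn (f a') K x → x ∈ O := by
  refine hK.eventually_forall_of_forall_eventually fun x hx => ?_
  by_cases hmax : IsMaxOn (f a) K x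
  · have hmem : ∀ᶠ z : α × β in 𝓝 (a, x), z.2 ∈ O :=
      continuous_snd.continuousAt.eventually_mem (hO.mem_nhds (h x hx hmax))
    exact hmem.mono fun z hz _ => hz
  · obtain ⟨w, hw, hlt⟩ : ∃ w ∈ K, f a x < f a w := by simpa [isMaxOn_iff] using hmax
    have hlt' : ∀ᶠ z : α × β in 𝓝 (a, x), f z.1 z.2 < f z.1 w :=
      hf.continuousAt.eventually_lt
        (hf.comp (continuous_fst.prodMk continuous_const)).continuousAt hlt
    exact hlt'.mono fun z hz hz_max => absurd (isMaxOn_iff.1 hz_max w hw) hz.not_ge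

section Stiefel

variable {m r : ℕ} {Z : Matrix (Fin m) (Fin r) ℝ}

lemma orthogonal_mul_mem_stiefel {V : Matrix (Fin m) (Fin m) ℝ} (hV : Vᵀ * V = 1)
    (hZ : Z ∈ Stiefel m r) : V * Z ∈ Stiefel m r := by
  change (V * Z)ᵀ * (V * Z) = 1
  rw [transpose_mul, Matrix.mul_assoc, ← Matrix.mul_assoc Vᵀ, hV, Matrix.one_mul, hZ]

lemma froSq_of_mem_stiefel (hZ : Z ∈ Stiefel m r) : froSq Z = r := by
  rw [froSq_eq_trace', hZ, trace_one, Fintype.card_fin]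

lemma trace_mul_transpose_of_mem_stiefel (hZ : Z ∈ Stiefel m r) : trace (Z * Zᵀ) = r := by
  rw [← froSq_eq_trace, froSq_of_mem_stiefel hZ]

lemma isCompact_stiefel (m r : ℕ) : IsCompact (Stiefel m r) :=
  isCompact_of_isClosed_of_fro_le (C := √r)
    (isClosed_eq (continuous_id.matrix_transpose.matrix_mul continuous_id) continuous_const)
    fun Z hZ => by rw [fro, froSq_of_mem_stiefel hZ]

lemma le_of_mem_stiefel (hZ : Z ∈ Stiefel m r) : r ≤ m :=
  calc r = (Zᵀ * Z).rank := by rw [hZ, rank_one, Fintype.card_fin]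
    _ ≤ Z.rank := rank_mul_le_right _ _
    _ ≤ m := rank_le_height Z

lemma isStarProjection_mul_transpose (hZ : Z ∈ Stiefel m r) : IsStarProjection (Z * Zᵀ) where
  isIdempotentElem := by
    rw [IsIdempotentElem, Matrix.mul_assoc, ← Matrix.mul_assoc Zᵀ, hZ, Matrix.one_mul]
  isSelfAdjoint := by
    simp [isSelfAdjoint_iff, star_eq_conjTranspose]

open scoped MatrixOrder in
lemma diag_mul_transpose_le_one (hZ : Z ∈ Stiefel m r) (i : Fin m) : (Z * Zᵀ) i i ≤ 1 := by
  have hle : Z * Zᵀ ≤ 1 := (isStarProjection_mul_transpose hZ).le_one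
  simpa using (le_iff.1 hle).diag_nonneg (i := i)

end Stiefel

section CoordinateProjection

/-- The orthogonal projection onto the span of the coordinate vectors with index in `S`. The
orthogonal projections onto sums of eigenlines are its conjugates `V * coordProj S * Vᵀ`. -/
noncomputable def coordProj {ι : Type*} [DecidableEq ι] (S : Finset ι) : Matrix ι ι ℝ :=
  diagonal ((S : Set ι).indicator 1)

lemma sum_mul_coordProj {ι : Type*} [Fintype ι] [DecidableEq ι] (f : ι → ℝ) (S : Finset ι) :
    ∑ i, f i * coordProj S i i = ∑ i ∈ S, f i := by
  classical simp [coordProj, Set.indicator_apply]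

lemma froSq_diagonal {ι : Type*} [Fintype ι] [DecidableEq ι] (d : ι → ℝ) :
    froSq (diagonal d) = ∑ i, d i ^ 2 := by
  simp [froSq_eq_trace, trace, sq]

lemma froSq_coordProj {ι : Type*} [Fintype ι] [DecidableEq ι] (S : Finset ι) :
    froSq (coordProj S) = S.card := by
  classical simp [coordProj, froSq_diagonal, Set.indicator_apply]

lemma one_le_froSq_coordProj_sub {ι : Type*} [Fintype ι] [DecidableEq ι] {S T : Finset ι} {i : ι}
    (hS : i ∈ S) (hT : i ∉ T) : 1 ≤ froSq (coordProj S - coordProj T) := by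
  rw [coordProj, coordProj, diagonal_sub, froSq_diagonal]
  refine le_trans (by simp [hS, hT]) (Finset.single_le_sum (fun j _ => sq_nonneg _)
    (Finset.mem_univ i))

lemma froSq_mul_transpose_sub_coordProj {m r : ℕ} {Z : Matrix (Fin m) (Fin r) ℝ}
    (hZ : Z ∈ Stiefel m r) (S : Finset (Fin m)) :
    froSq (Z * Zᵀ - coordProj S) = r + S.card - 2 * ∑ i ∈ S, (Z * Zᵀ) i i := by
  have hproj : froSq (Z * Zᵀ) = r := by
    rw [froSq_eq_trace', transpose_mul, transpose_transpose,
      (isStarProjection_mul_transpose hZ).isIdempotentElem.eq,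
      trace_mul_transpose_of_mem_stiefel hZ]
  have hcross : trace ((Z * Zᵀ)ᵀ * coordProj S) = ∑ i ∈ S, (Z * Zᵀ) i i := by
    rw [transpose_mul, transpose_transpose, ← sum_mul_coordProj, trace]
    simp only [coordProj, diag_apply, mul_diagonal, diagonal_apply_eq]
  rw [froSq_sub, hproj, froSq_coordProj, hcross]

lemma mul_transpose_eq_coordProj {m r : ℕ} {Z : Matrix (Fin m) (Fin r) ℝ} (hZ : Z ∈ Stiefel m r)
    {S : Finset (Fin m)} (hS : S.card = r) (h : ∀ i ∈ S, (Z * Zᵀ) i i = 1) :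
    Z * Zᵀ = coordProj S := by
  rw [← sub_eq_zero, ← froSq_eq_zero_iff, froSq_mul_transpose_sub_coordProj hZ,
    Finset.sum_congr rfl h, Finset.sum_const, nsmul_one, hS]
  ring

lemma exists_mem_stiefel_mul_transpose_eq_coordProj {m r : ℕ} {S : Finset (Fin m)}
    (hS : S.card = r) : ∃ E ∈ Stiefel m r, E * Eᵀ = coordProj S := by
  let e := S.orderEmbOfFin hS
  let E : Matrix (Fin m) (Fin r) ℝ := (1 : Matrix (Fin m) (Fin m) ℝ).submatrix id e
  have hE : E ∈ Stiefel m r := by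
    ext k l
    simp [E, mul_apply, one_apply]
  refine ⟨E, hE, mul_transpose_eq_coordProj hE hS fun i hi => ?_⟩
  obtain ⟨k, rfl⟩ : i ∈ Set.range e := by rwa [Finset.range_orderEmbOfFin]
  simp [E, mul_apply, one_apply]

end CoordinateProjection

section KyFan

-- Shifting `lam` by `c` costs nothing, as `d` and the indicator of `S` have the same sum; after the
-- shift every term is nonnegative.
lemma sum_sub_sum_mul_eq_sum_abs {ι : Type*} [Fintype ι] {lam d : ι → ℝ} {S : Finset ι} {c : ℝ}
    (hd₀ : ∀ i, 0 ≤ d i) (hd₁ : ∀ i, d i ≤ 1) (hd : ∑ i, d i = S.card)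
    (hin : ∀ i ∈ S, c ≤ lam i) (hout : ∀ i ∉ S, lam i ≤ c) :
    ∑ i ∈ S, lam i - ∑ i, lam i * d i =
      ∑ i, |lam i - c| * |(S : Set ι).indicator 1 i - d i| := by
  classical
  have hterm (i : ι) : |lam i - c| * |(S : Set ι).indicator 1 i - d i| =
      (lam i * (S : Set ι).indicator 1 i - lam i * d i)
        - c * ((S : Set ι).indicator 1 i - d i) := by
    by_cases hi : i ∈ S
    · rw [Set.indicator_of_mem (Finset.mem_coe.2 hi), Pi.one_apply,
        abs_of_nonneg (sub_nonneg.2 (hin i hi)), abs_of_nonneg (sub_nonneg.2 (hd₁ i))]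
      ring
    · rw [Set.indicator_of_notMem (mt Finset.mem_coe.1 hi),
        abs_of_nonpos (sub_nonpos.2 (hout i hi)), abs_of_nonpos (sub_nonpos.2 (hd₀ i))]
      ring
  have hlam : ∑ i, lam i * (S : Set ι).indicator 1 i = ∑ i ∈ S, lam i := by
    simp [Set.indicator_apply]
  have hcard : ∑ i, (S : Set ι).indicator (1 : ι → ℝ) i = S.card := by
    simp [Set.indicator_apply]
  rw [Finset.sum_congr rfl fun i _ => hterm i, Finset.sum_sub_distrib, Finset.sum_sub_distrib,
    ← Finset.mul_sum, Finset.sum_sub_distrib, hlam, hcard, hd]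
  ring

lemma froSq_transpose_mul {m p r : ℕ} (Z : Matrix (Fin m) (Fin r) ℝ)
    (Y : Matrix (Fin m) (Fin p) ℝ) : froSq (Zᵀ * Y) = trace (Z * Zᵀ * (Y * Yᵀ)) := by
  rw [froSq_eq_trace', transpose_mul, transpose_transpose, Matrix.mul_assoc, trace_mul_comm]
  simp only [Matrix.mul_assoc]

section Diagonalized

variable {m p r : ℕ} {Y : Matrix (Fin m) (Fin p) ℝ} {V : Matrix (Fin m) (Fin m) ℝ}
  {lam : Fin m → ℝ} {Z : Matrix (Fin m) (Fin r) ℝ} {S : Finset (Fin m)}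

lemma froSq_transpose_mul_eq_sum (hY : Y * Yᵀ = V * diagonal lam * Vᵀ)
    (Z : Matrix (Fin m) (Fin r) ℝ) :
    froSq (Zᵀ * Y) = ∑ i, lam i * (Vᵀ * Z * (Vᵀ * Z)ᵀ) i i := by
  have hrot : trace (Z * Zᵀ * (V * diagonal lam * Vᵀ)) =
      trace (Vᵀ * Z * (Vᵀ * Z)ᵀ * diagonal lam) := by
    rw [← Matrix.mul_assoc, trace_mul_comm]
    simp only [transpose_mul, transpose_transpose, Matrix.mul_assoc]
  rw [froSq_transpose_mul, hY, hrot, trace]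
  simp only [diag_apply, mul_diagonal, mul_comm]

lemma orthogonal_mul_transpose_mem_stiefel (hV : Vᵀ * V = 1) (hZ : Z ∈ Stiefel m r) :
    Vᵀ * Z ∈ Stiefel m r :=
  orthogonal_mul_mem_stiefel (by rw [transpose_transpose, mul_eq_one_comm.1 hV]) hZ

lemma sum_sub_froSq_transpose_mul (hV : Vᵀ * V = 1) (hY : Y * Yᵀ = V * diagonal lam * Vᵀ)
    (hS : S.card = r) {c : ℝ} (hin : ∀ i ∈ S, c ≤ lam i) (hout : ∀ i ∉ S, lam i ≤ c)
    (hZ : Z ∈ Stiefel m r) :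
    ∑ i ∈ S, lam i - froSq (Zᵀ * Y) = ∑ i, |lam i - c| *
      |(S : Set (Fin m)).indicator 1 i - (Vᵀ * Z * (Vᵀ * Z)ᵀ) i i| := by
  have hW := orthogonal_mul_transpose_mem_stiefel hV hZ
  have hnonneg (i : Fin m) : 0 ≤ (Vᵀ * Z * (Vᵀ * Z)ᵀ) i i := by
    rw [mul_apply]
    exact Finset.sum_nonneg fun j _ => mul_self_nonneg ((Vᵀ * Z) i j)
  rw [froSq_transpose_mul_eq_sum hY, sum_sub_sum_mul_eq_sum_abs hnonneg
    (diag_mul_transpose_le_one hW) ?_ hin hout]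
  rw [hS]
  exact trace_mul_transpose_of_mem_stiefel hW

lemma transpose_mul_mul_transpose_eq_iff (hV : Vᵀ * V = 1) {D : Matrix (Fin m) (Fin m) ℝ} :
    Vᵀ * Z * (Vᵀ * Z)ᵀ = D ↔ Z * Zᵀ = V * D * Vᵀ := by
  have hV' : V * Vᵀ = 1 := mul_eq_one_comm.1 hV
  constructor
  · rintro rfl
    simp only [transpose_mul, transpose_transpose, Matrix.mul_assoc, hV', Matrix.mul_one]
    simp only [← Matrix.mul_assoc, hV', Matrix.one_mul]
  · intro h
    calc Vᵀ * Z * (Vᵀ * Z)ᵀ = Vᵀ * (Z * Zᵀ) * V := by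
          simp only [transpose_mul, transpose_transpose, Matrix.mul_assoc]
      _ = Vᵀ * V * D * (Vᵀ * V) := by rw [h]; simp only [Matrix.mul_assoc]
      _ = D := by rw [hV, Matrix.one_mul, Matrix.mul_one]

lemma exists_mem_stiefel_mul_transpose_eq (hV : Vᵀ * V = 1) (hS : S.card = r) :
    ∃ U ∈ Stiefel m r, U * Uᵀ = V * coordProj S * Vᵀ := by
  obtain ⟨E, hE, hES⟩ := exists_mem_stiefel_mul_transpose_eq_coordProj hS
  refine ⟨V * E, orthogonal_mul_mem_stiefel hV hE, ?_⟩
  simp only [← hES, transpose_mul, Matrix.mul_assoc]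

lemma froSq_transpose_mul_of_mul_transpose_eq (hV : Vᵀ * V = 1)
    (hY : Y * Yᵀ = V * diagonal lam * Vᵀ) (hZ : Z * Zᵀ = V * coordProj S * Vᵀ) :
    froSq (Zᵀ * Y) = ∑ i ∈ S, lam i := by
  rw [froSq_transpose_mul_eq_sum hY, (transpose_mul_mul_transpose_eq_iff hV).2 hZ,
    sum_mul_coordProj]

lemma exists_mem_hSet_mul_transpose_eq (hV : Vᵀ * V = 1) (hY : Y * Yᵀ = V * diagonal lam * Vᵀ)
    (hS : S.card = r) {c : ℝ} (hin : ∀ i ∈ S, c ≤ lam i) (hout : ∀ i ∉ S, lam i ≤ c) :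
    ∃ U ∈ HSet Y r, U * Uᵀ = V * coordProj S * Vᵀ := by
  obtain ⟨U, hU, hUS⟩ := exists_mem_stiefel_mul_transpose_eq hV hS
  refine ⟨U, ⟨hU, fun W hW => ?_⟩, hUS⟩
  rw [froSq_transpose_mul_of_mul_transpose_eq hV hY hUS, ← sub_nonneg,
    sum_sub_froSq_transpose_mul hV hY hS hin hout hW]
  positivity

lemma mul_transpose_eq_of_mem_hSet (hV : Vᵀ * V = 1) (hY : Y * Yᵀ = V * diagonal lam * Vᵀ)
    (hS : S.card = r) (hlam : ∀ i ∈ S, ∀ j ∉ S, lam j < lam i) (hZ : Z ∈ HSet Y r) :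
    Z * Zᵀ = V * coordProj S * Vᵀ := by
  obtain ⟨c, hout, hin⟩ : ∃ c, (∀ j ∉ S, lam j < c) ∧ ∀ i ∈ S, c < lam i := by
    simpa using Order.exists_between_finsets (lo := Sᶜ.image lam) (hi := S.image lam)
      (by simpa using fun j hj i hi => hlam i hi j hj)
  obtain ⟨U, hU, hUS⟩ := exists_mem_stiefel_mul_transpose_eq hV hS
  have hgap := sum_sub_froSq_transpose_mul hV hY hS (fun i hi => (hin i hi).le)
    (fun j hj => (hout j hj).le) hZ.1
  have hle : ∑ i ∈ S, lam i - froSq (Zᵀ * Y) ≤ 0 := by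
    rw [sub_nonpos, ← froSq_transpose_mul_of_mul_transpose_eq hV hY hUS]
    exact hZ.2 U hU
  have hzero := (Finset.sum_eq_zero_iff_of_nonneg fun i _ => by positivity).1
    (le_antisymm (hgap ▸ hle) (by positivity))
  rw [← transpose_mul_mul_transpose_eq_iff hV]
  refine mul_transpose_eq_coordProj (orthogonal_mul_transpose_mem_stiefel hV hZ.1) hS
    fun i hi => ?_
  have hi_zero := hzero i (Finset.mem_univ i)
  rw [mul_eq_zero, abs_eq_zero, abs_eq_zero, sub_eq_zero, sub_eq_zero,
    Set.indicator_of_mem (Finset.mem_coe.2 hi)] at hi_zero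
  exact (hi_zero.resolve_left (hin i hi).ne').symm

end Diagonalized

end KyFan

section Spectral

lemma exists_orthogonal_diagonalization {ι : Type*} [Fintype ι] [DecidableEq ι]
    {A : Matrix ι ι ℝ} (hA : A.IsHermitian) :
    ∃ U : Matrix ι ι ℝ, Uᵀ * U = 1 ∧ A = U * diagonal hA.eigenvalues * Uᵀ := by
  refine ⟨hA.eigenvectorUnitary, ?_, ?_⟩
  · simpa only [star_eq_conjTranspose, conjTranspose_eq_transpose_of_trivial] using
      Unitary.coe_star_mul_self hA.eigenvectorUnitary
  · simpa only [Unitary.conjStarAlgAut_apply, star_eq_conjTranspose,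
      conjTranspose_eq_transpose_of_trivial, RCLike.ofReal_real_eq_id, Function.id_comp] using
      hA.spectral_theorem

variable {m p r : ℕ}

lemma eigList_eq_ofFn {Y : Matrix (Fin m) (Fin p) ℝ} {σ : Equiv.Perm (Fin m)}
    (hσ : Antitone ((isHermitian_mul_conjTranspose_self Y).eigenvalues ∘ σ)) :
    eigList Y = List.ofFn ((isHermitian_mul_conjTranspose_self Y).eigenvalues ∘ σ) := by
  refine List.Perm.eq_of_pairwise' (r := (· ≥ ·)) ?_ ?_ ?_
  · exact List.pairwise_reverse.2 (Multiset.pairwise_sort _ _)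
  · exact List.pairwise_ofFn.2 fun i j hij => hσ hij.le
  · refine (List.reverse_perm _).trans (.trans ?_ (σ.ofFn_comp_perm _).symm)
    rw [← Multiset.coe_eq_coe, Multiset.sort_eq, Fin.univ_val_map]

lemma exists_antitone_diagonalization (Y : Matrix (Fin m) (Fin p) ℝ) :
    ∃ (V : Matrix (Fin m) (Fin m) ℝ) (lam : Fin m → ℝ), Vᵀ * V = 1 ∧ Antitone lam ∧
      Y * Yᵀ = V * diagonal lam * Vᵀ ∧ ∀ i : Fin m, sval Y (i + 1) = √(lam i) := by
  let hA := isHermitian_mul_conjTranspose_self Y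
  let σ := Tuple.sort (-hA.eigenvalues)
  obtain ⟨U, hU, hdiag⟩ := exists_orthogonal_diagonalization hA
  have hanti : Antitone (hA.eigenvalues ∘ σ) := fun i j hij =>
    neg_le_neg_iff.1 (Tuple.monotone_sort (-hA.eigenvalues) hij)
  refine ⟨U.submatrix id σ, hA.eigenvalues ∘ σ, ?_, hanti, ?_, fun i => ?_⟩
  · rw [transpose_submatrix, ← submatrix_mul _ _ _ _ _ Function.bijective_id, hU,
      submatrix_one_equiv]
  · rw [← conjTranspose_eq_transpose_of_trivial Y, transpose_submatrix, ← submatrix_diagonal_equiv,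
      submatrix_mul_equiv, submatrix_mul_equiv, submatrix_id_id]
    exact hdiag
  · simp [sval, eigList_eq_ofFn hanti]

end Spectral

section UniqueTopProj

variable {m p r : ℕ} {Y : Matrix (Fin m) (Fin p) ℝ}

/-- All maximizers of `‖Zᵀ Y‖_F²` have the same column space, recorded by its orthogonal projection
`Z * Zᵀ`; equivalently, `Y` has only one top `r`-dimensional left singular subspace. -/
def HasUniqueTopProj (Y : Matrix (Fin m) (Fin p) ℝ) (r : ℕ) : Prop :=
  ∃ P, ∀ Z ∈ HSet Y r, Z * Zᵀ = P

lemma card_filter_val_lt (hr : r ≤ m) : ({i : Fin m | i < r} : Finset (Fin m)).card = r := by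
  rw [Fin.card_filter_val_lt, min_eq_right hr]

lemma hasUniqueTopProj_of_sval_lt (hgap : sval Y (r + 1) < sval Y r) : HasUniqueTopProj Y r := by
  obtain ⟨V, lam, hV, hanti, hY, hsval⟩ := exists_antitone_diagonalization Y
  refine ⟨V * coordProj {i : Fin m | i < r} * Vᵀ, fun Z hZ => mul_transpose_eq_of_mem_hSet hV hY
    (card_filter_val_lt (le_of_mem_stiefel hZ.1)) (fun i hi j hj => ?_) hZ⟩
  replace hi : (i : ℕ) < r := by simpa using hi
  replace hj : r ≤ (j : ℕ) := by simpa using hj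
  have hi_le : sval Y r ≤ √(lam i) := by
    obtain ⟨q, rfl⟩ : ∃ q, r = q + 1 := Nat.exists_eq_add_one_of_ne_zero (by omega)
    rw [hsval ⟨q, by omega⟩]
    exact Real.sqrt_le_sqrt (hanti (Nat.le_of_lt_succ hi))
  have hj_le : √(lam j) ≤ sval Y (r + 1) := by
    rw [hsval ⟨r, by omega⟩]
    exact Real.sqrt_le_sqrt (hanti hj)
  exact lt_of_not_ge fun hle => (hj_le.trans_lt hgap).not_ge (hi_le.trans (Real.sqrt_le_sqrt hle))

lemma froSq_orthogonal_conj {ι : Type*} [Fintype ι] [DecidableEq ι] {V : Matrix ι ι ℝ}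
    (hV : Vᵀ * V = 1) (D : Matrix ι ι ℝ) : froSq (V * D * Vᵀ) = froSq D := by
  have hV' : (V * D * Vᵀ) * (V * D * Vᵀ)ᵀ = V * (D * Dᵀ * Vᵀ) := by
    simp only [transpose_mul, transpose_transpose, Matrix.mul_assoc]
    rw [← Matrix.mul_assoc Vᵀ, hV, Matrix.one_mul]
  rw [froSq_eq_trace, hV', trace_mul_comm, Matrix.mul_assoc, hV, Matrix.mul_one, ← froSq_eq_trace]

lemma hasUniqueTopProj_of_fro_lt
    (h : ∀ Z₁ ∈ HSet Y r, ∀ Z₂ ∈ HSet Y r, fro (Z₁ * Z₁ᵀ - Z₂ * Z₂ᵀ) < 1) :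
    HasUniqueTopProj Y r := by
  obtain ⟨V, lam, hV, hanti, hY, -⟩ := exists_antitone_diagonalization Y
  let S : Finset (Fin m) := {i | i < r}
  refine ⟨V * coordProj S * Vᵀ, fun Z hZ => ?_⟩
  have hS : S.card = r := card_filter_val_lt (le_of_mem_stiefel hZ.1)
  refine mul_transpose_eq_of_mem_hSet hV hY hS (fun i hi j hj => ?_) hZ
  have hlt : ∀ k ∈ S, k < j := by grind
  have hgt : ∀ k ∉ S, i < k := by grind
  -- If `lam i = lam j`, exchanging `i` and `j` yields a second maximizer far from the first.
  by_contra! hij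
  have hin : ∀ k ∈ S, lam i ≤ lam k := fun k hk => hij.trans (hanti (hlt k hk).le)
  have hout : ∀ k ∉ S, lam k ≤ lam i := fun k hk => hanti (hgt k hk).le
  obtain ⟨U₁, hU₁, hU₁S⟩ := exists_mem_hSet_mul_transpose_eq hV hY hS hin hout
  obtain ⟨U₂, hU₂, hU₂T⟩ := exists_mem_hSet_mul_transpose_eq (r := r) (c := lam i)
    (S := insert j (S.erase i)) hV hY (by grind) (by grind) (by grind)
  have hfar : 1 ≤ fro (U₁ * U₁ᵀ - U₂ * U₂ᵀ) := by
    rw [hU₁S, hU₂T, ← Matrix.sub_mul, ← Matrix.mul_sub, fro, froSq_orthogonal_conj hV,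
      Real.one_le_sqrt]
    exact one_le_froSq_coordProj_sub hi (by grind)
  exact (h U₁ hU₁ U₂ hU₂).not_ge hfar

end UniqueTopProj

section Stability

variable {m p r : ℕ} {Y : Matrix (Fin m) (Fin p) ℝ}

lemma eventually_hSet_subset {O : Set (Matrix (Fin m) (Fin r) ℝ)} (hO : IsOpen O)
    (h : HSet Y r ⊆ O) : ∀ᶠ Y' in 𝓝 Y, HSet Y' r ⊆ O := by
  have hcont : Continuous (Function.uncurry
      fun (Y : Matrix (Fin m) (Fin p) ℝ) (Z : Matrix (Fin m) (Fin r) ℝ) => froSq (Zᵀ * Y)) :=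
    continuous_froSq.comp (continuous_snd.matrix_transpose.matrix_mul continuous_fst)
  have hmax : ∀ᶠ Y' in 𝓝 Y, ∀ Z ∈ Stiefel m r,
      IsMaxOn (fun Z => froSq (Zᵀ * Y')) (Stiefel m r) Z → Z ∈ O :=
    eventually_isMaxOn_mem (isCompact_stiefel m r) hcont hO
      fun Z hZ hZ_max => h ⟨hZ, isMaxOn_iff.1 hZ_max⟩
  exact hmax.mono fun Y' hY' Z hZ => hY' Z hZ.1 (isMaxOn_iff.2 hZ.2)

lemma HasUniqueTopProj.eventually (h : HasUniqueTopProj Y r) :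
    ∀ᶠ Y' in 𝓝 Y, HasUniqueTopProj Y' r := by
  obtain ⟨P, hP⟩ := h
  have hopen : IsOpen {Z : Matrix (Fin m) (Fin r) ℝ | fro (Z * Zᵀ - P) < 1 / 2} :=
    isOpen_lt (continuous_fro.comp ((continuous_id.matrix_mul
      continuous_id.matrix_transpose).sub continuous_const)) continuous_const
  have hnear : HSet Y r ⊆ {Z | fro (Z * Zᵀ - P) < 1 / 2} := fun Z hZ => by
    simp [hP Z hZ, fro, froSq]
  filter_upwards [eventually_hSet_subset hopen hnear] with Y' hY'
  refine hasUniqueTopProj_of_fro_lt fun Z₁ hZ₁ Z₂ hZ₂ => ?_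
  calc fro (Z₁ * Z₁ᵀ - Z₂ * Z₂ᵀ) ≤ fro (Z₁ * Z₁ᵀ - P) + fro (Z₂ * Z₂ᵀ - P) := fro_sub_le _ _ _
    _ < 1 / 2 + 1 / 2 := add_lt_add (hY' hZ₁) (hY' hZ₂)
    _ = 1 := add_halves 1

end Stability

section UniquenessConditions

lemma eigList_eq_sort_roots {a b : ℕ} (M : Matrix (Fin a) (Fin b) ℝ) :
    eigList M = ((M * Mᵀ).charpoly.roots.sort (· ≤ ·)).reverse := by
  rw [← conjTranspose_eq_transpose_of_trivial,
    (isHermitian_mul_conjTranspose_self M).roots_charpoly_eq_eigenvalues]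
  rfl

lemma nuclearNorm_eq_of_transpose_mul_self_eq {a b : ℕ} {M N : Matrix (Fin a) (Fin b) ℝ}
    (h : Mᵀ * M = Nᵀ * N) : nuclearNorm M = nuclearNorm N := by
  have hchar : (M * Mᵀ).charpoly = (N * Nᵀ).charpoly := by
    have hM := charpoly_mul_comm' M Mᵀ
    rw [h, ← charpoly_mul_comm' N Nᵀ] at hM
    exact mul_left_cancel₀ (pow_ne_zero _ Polynomial.X_ne_zero) hM
  simp only [nuclearNorm, sval, eigList_eq_sort_roots, hchar]

variable {m p r : ℕ} {Y : Matrix (Fin m) (Fin p) ℝ} {X Z Z₁ Z₂ : Matrix (Fin m) (Fin r) ℝ}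

lemma transpose_mul_self_eq_of_mul_transpose_eq (h : Z₁ * Z₁ᵀ = Z₂ * Z₂ᵀ) :
    (Z₁ᵀ * X)ᵀ * (Z₁ᵀ * X) = (Z₂ᵀ * X)ᵀ * (Z₂ᵀ * X) := by
  have hX (Z : Matrix (Fin m) (Fin r) ℝ) : (Zᵀ * X)ᵀ * (Zᵀ * X) = Xᵀ * (Z * Zᵀ) * X := by
    simp only [transpose_mul, transpose_transpose, Matrix.mul_assoc]
  rw [hX, hX, h]

lemma HasUniqueTopProj.nucMax (h : HasUniqueTopProj Y r) (hZ : Z ∈ HSet Y r) : NucMax Y X Z := by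
  obtain ⟨P, hP⟩ := h
  refine ⟨hZ, fun W hW => le_of_eq ?_⟩
  exact nuclearNorm_eq_of_transpose_mul_self_eq
    (transpose_mul_self_eq_of_mul_transpose_eq ((hP W hW).trans (hP Z hZ).symm))

lemma HasUniqueTopProj.uniqCond_iff (h : HasUniqueTopProj Y r) :
    UniqCond Y r X ↔ HSet Y r ⊆ {Z | (Zᵀ * X).det ≠ 0} := by
  refine ⟨fun hX Z hZ => hX.1 Z (h.nucMax hZ), fun hX => ⟨fun U hU => hX hU.1, ?_⟩⟩
  obtain ⟨P, hP⟩ := h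
  exact fun U₁ U₂ hU₁ hU₂ => (hP U₁ hU₁.1).trans (hP U₂ hU₂.1).symm

lemma HasUniqueTopProj.eventually_uniqCond (h : HasUniqueTopProj Y r) (hX : UniqCond Y r X) :
    ∀ᶠ Y' in 𝓝 Y, UniqCond Y' r X := by
  have hopen : IsOpen {Z : Matrix (Fin m) (Fin r) ℝ | (Zᵀ * X).det ≠ 0} :=
    isOpen_ne_fun (continuous_id.matrix_transpose.matrix_mul continuous_const).matrix_det
      continuous_const
  filter_upwards [h.eventually, eventually_hSet_subset hopen (h.uniqCond_iff.1 hX)] with Y' hY' hdet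
  exact hY'.uniqCond_iff.2 hdet

end UniquenessConditions

section Procrustes

open scoped MatrixOrder

lemma exists_polar {n : Type*} [Fintype n] [DecidableEq n] {M : Matrix n n ℝ} (hM : M.det ≠ 0) :
    ∃ Q S : Matrix n n ℝ, Qᵀ * Q = 1 ∧ S.PosSemidef ∧ M = Q * S := by
  have hMM : (Mᵀ * M).PosSemidef := by
    simpa only [conjTranspose_eq_transpose_of_trivial] using posSemidef_conjTranspose_mul_self M
  let S := CFC.sqrt (Mᵀ * M)
  have hS : S.PosSemidef := (CFC.sqrt_nonneg _).posSemidef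
  have hSS : S * S = Mᵀ * M := CFC.sqrt_mul_sqrt_self _ hMM.nonneg
  have hS_symm : Sᵀ = S := by
    rw [← conjTranspose_eq_transpose_of_trivial, hS.isHermitian.eq]
  have hS_unit : IsUnit S.det := by
    have hdet : S.det * S.det = M.det * M.det := by
      rw [← det_mul, hSS, det_mul, det_transpose]
    exact isUnit_iff_ne_zero.2 fun h0 => hM (by simpa [h0] using hdet.symm)
  refine ⟨M * S⁻¹, S, ?_, hS, (nonsing_inv_mul_cancel_right _ _ hS_unit).symm⟩
  rw [transpose_mul, transpose_nonsing_inv, hS_symm, Matrix.mul_assoc, ← Matrix.mul_assoc Mᵀ, ← hSS,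
      Matrix.mul_assoc S, mul_nonsing_inv S hS_unit, Matrix.mul_one, nonsing_inv_mul S hS_unit]

lemma mul_eq_of_trace_le_trace_mul {n : Type*} [Fintype n] [DecidableEq n] {Q S : Matrix n n ℝ}
    (hQ : Qᵀ * Q = 1) (hS : S.PosSemidef) (h : trace S ≤ trace (Q * S)) : Q * S = S := by
  obtain ⟨T, hT⟩ : ∃ T : Matrix n n ℝ, S = T * Tᵀ := by
    obtain ⟨B, hB⟩ := CStarAlgebra.nonneg_iff_eq_mul_star_self.1 hS.nonneg
    exact ⟨B, by rw [hB, star_eq_conjTranspose, conjTranspose_eq_transpose_of_trivial]⟩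
  have hdist : froSq (Q * T - T) = 2 * (trace S - trace (Q * S)) := by
    have hQT : froSq (Q * T) = trace S := by
      rw [froSq_eq_trace', transpose_mul, Matrix.mul_assoc, ← Matrix.mul_assoc Qᵀ, hQ,
        Matrix.one_mul, trace_mul_comm, hT]
    have hcross : trace ((Q * T)ᵀ * T) = trace (Q * S) := by
      rw [← trace_transpose, transpose_mul, transpose_transpose, trace_mul_comm, Matrix.mul_assoc,
        hT]
    rw [froSq_sub, hQT, hcross, froSq_eq_trace, ← hT]
    ring
  have hQT : Q * T = T := by
    rw [← sub_eq_zero, ← froSq_eq_zero_iff]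
    exact le_antisymm (by linarith) (froSq_nonneg _)
  rw [hT, ← Matrix.mul_assoc, hQT]

lemma posSemidef_of_trace_orthogonal_mul_le {n : Type*} [Fintype n] [DecidableEq n]
    {M : Matrix n n ℝ} (hM : M.det ≠ 0)
    (h : ∀ Q : Matrix n n ℝ, Qᵀ * Q = 1 → trace (Qᵀ * M) ≤ trace M) : M.PosSemidef := by
  obtain ⟨Q, S, hQ, hS, rfl⟩ := exists_polar hM
  have htrace : trace S ≤ trace (Q * S) := by
    simpa only [← Matrix.mul_assoc, hQ, Matrix.one_mul] using h Q hQ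
  rwa [mul_eq_of_trace_le_trace_mul hQ hS htrace]

lemma eq_of_posSemidef_of_transpose_mul_self_eq {n : Type*} [Fintype n] {M N : Matrix n n ℝ}
    (hM : M.PosSemidef) (hN : N.PosSemidef) (h : Mᵀ * M = Nᵀ * N) : M = N := by
  classical
  have hsq {A : Matrix n n ℝ} (hA : A.PosSemidef) : Aᵀ * A = A ^ 2 := by
    rw [← conjTranspose_eq_transpose_of_trivial, hA.isHermitian.eq, sq]
  exact (CFC.sq_eq_sq_iff M N hM.nonneg hN.nonneg).1 (by rw [← hsq hM, ← hsq hN, h])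

lemma isClosed_setOf_posSemidef {n : Type*} [Finite n] :
    IsClosed {M : Matrix n n ℝ | M.PosSemidef} := by
  cases nonempty_fintype n
  simp only [posSemidef_iff_dotProduct_mulVec, Set.ofPred_and, Set.ofPred_forall]
  refine (isClosed_eq continuous_id.matrix_conjTranspose continuous_id).inter
    (isClosed_iInter fun x => isClosed_le continuous_const ?_)
  exact continuous_const.dotProduct (continuous_id.matrix_mulVec continuous_const)

end Procrustes

section Projection

variable {m p r : ℕ} {Y : Matrix (Fin m) (Fin p) ℝ} {X Z Z₁ Z₂ : Matrix (Fin m) (Fin r) ℝ}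

lemma mul_orthogonal_mem_hSet {Q : Matrix (Fin r) (Fin r) ℝ} (hQ : Qᵀ * Q = 1)
    (hZ : Z ∈ HSet Y r) : Z * Q ∈ HSet Y r := by
  have hproj : Z * Q * (Z * Q)ᵀ = Z * Zᵀ := by
    rw [transpose_mul, Matrix.mul_assoc, ← Matrix.mul_assoc Q, mul_eq_one_comm.1 hQ, Matrix.one_mul]
  refine ⟨?_, fun W hW => ?_⟩
  · change (Z * Q)ᵀ * (Z * Q) = 1
    rw [transpose_mul, Matrix.mul_assoc, ← Matrix.mul_assoc Zᵀ, hZ.1, Matrix.one_mul, hQ]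
  · rw [froSq_transpose_mul (Z * Q), hproj, ← froSq_transpose_mul]
    exact hZ.2 W hW

lemma IsProj.trace_le (h : IsProj Y X Z) (hZ₁ : Z₁ ∈ HSet Y r) :
    trace (Z₁ᵀ * X) ≤ trace (Zᵀ * X) := by
  have hle := h.2 Z₁ hZ₁
  rw [froSq_sub, froSq_sub, froSq_of_mem_stiefel h.1.1, froSq_of_mem_stiefel hZ₁.1] at hle
  linarith

lemma IsProj.posSemidef (h : IsProj Y X Z) (hdet : (Zᵀ * X).det ≠ 0) : (Zᵀ * X).PosSemidef :=
  posSemidef_of_trace_orthogonal_mul_le hdet fun Q hQ => by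
    simpa only [transpose_mul, Matrix.mul_assoc] using h.trace_le (mul_orthogonal_mem_hSet hQ h.1)

lemma eq_of_mul_transpose_eq_of_posSemidef (hZ : Z₁ * Z₁ᵀ = Z₂ * Z₂ᵀ) (hdet : (Z₁ᵀ * X).det ≠ 0)
    (h₁ : (Z₁ᵀ * X).PosSemidef) (h₂ : (Z₂ᵀ * X).PosSemidef) : Z₁ = Z₂ := by
  have hM : Z₁ᵀ * X = Z₂ᵀ * X := eq_of_posSemidef_of_transpose_mul_self_eq h₁ h₂
    (transpose_mul_self_eq_of_mul_transpose_eq hZ)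
  refine mul_left_injective_of_inv _ _ (mul_nonsing_inv _ hdet.isUnit) ?_
  calc Z₁ * (Z₁ᵀ * X) = Z₂ * (Z₂ᵀ * X) := by rw [← Matrix.mul_assoc, hZ, Matrix.mul_assoc]
    _ = Z₂ * (Z₁ᵀ * X) := by rw [hM]

lemma HasUniqueTopProj.tendsto_of_isProj {α : Type*} {l : Filter α} (h : HasUniqueTopProj Y r)
    (hX : UniqCond Y r X) {Yk : α → Matrix (Fin m) (Fin p) ℝ} (hYk : Tendsto Yk l (𝓝 Y))
    (hZ : IsProj Y X Z) {Zk : α → Matrix (Fin m) (Fin r) ℝ}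
    (hZk : ∀ᶠ k in l, IsProj (Yk k) X (Zk k)) : Tendsto Zk l (𝓝 Z) := by
  obtain ⟨P, hP⟩ := id h
  have hdet := h.uniqCond_iff.1 hX
  refine tendsto_nhds.2 fun O hO hZO => ?_
  have hopen : IsOpen (O ∪ {W : Matrix (Fin m) (Fin r) ℝ | ¬(Wᵀ * X).PosSemidef}) :=
    hO.union (isClosed_setOf_posSemidef.preimage
      (continuous_id.matrix_transpose.matrix_mul continuous_const)).isOpen_compl
  have hsub : HSet Y r ⊆ O ∪ {W | ¬(Wᵀ * X).PosSemidef} := fun W hW => by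
    by_cases hWX : (Wᵀ * X).PosSemidef
    · rw [eq_of_mul_transpose_eq_of_posSemidef ((hP W hW).trans (hP Z hZ.1).symm) (hdet hW) hWX
        (hZ.posSemidef (hdet hZ.1))]
      exact Or.inl hZO
    · exact Or.inr hWX
  filter_upwards [hZk, hYk.eventually h.eventually, hYk.eventually (h.eventually_uniqCond hX),
    hYk.eventually (eventually_hSet_subset hopen hsub)] with k hproj htop huniq hmem
  exact (hmem hproj.1).resolve_right
    (not_not_intro (hproj.posSemidef (htop.uniqCond_iff.1 huniq hproj.1)))

end Projection

theorem stmt5_general {α : Type*} {l : Filter α} {m p r : ℕ} {Y : Matrix (Fin m) (Fin p) ℝ}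
    (hgap : sval Y (r + 1) < sval Y r) {Yk : α → Matrix (Fin m) (Fin p) ℝ}
    (hYk : Tendsto (fun k => fro (Yk k - Y)) l (𝓝 0)) {X : Matrix (Fin m) (Fin r) ℝ}
    (hU : UniqCond Y r X) :
    (∀ᶠ k in l, UniqCond (Yk k) r X) ∧
      ∀ Z, IsProj Y X Z → ∀ Zk : α → Matrix (Fin m) (Fin r) ℝ,
        (∀ᶠ k in l, IsProj (Yk k) X (Zk k)) → Tendsto (fun k => fro (Zk k - Z)) l (𝓝 0) := by
  have htop : HasUniqueTopProj Y r := hasUniqueTopProj_of_sval_lt hgap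
  rw [tendsto_fro_sub_iff] at hYk
  exact ⟨hYk.eventually (htop.eventually_uniqCond hU),
    fun Z hZ Zk hZk => tendsto_fro_sub_iff.2 (htop.tendsto_of_isProj hU hYk hZ hZk)⟩

/-- If `σ_r(Y) > σ_{r+1}(Y)`, `Y^k → Y`, and `X` satisfies the
uniqueness conditions for `(Y,r)`, then eventually `X` satisfies the uniqueness
conditions for `(Y^k,r)` and `T_{Y^k,r}(X) → T_{Y,r}(X)`. -/
theorem stmt5 {m p r : ℕ} (hr1 : 1 ≤ r) (hrm : r ≤ m)
    (Y : Matrix (Fin m) (Fin p) ℝ) (hgap : sval Y (r + 1) < sval Y r)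
    (Yk : ℕ → Matrix (Fin m) (Fin p) ℝ)
    (hYk : Filter.Tendsto (fun k => fro (Yk k - Y)) Filter.atTop (nhds 0))
    (X : Matrix (Fin m) (Fin r) ℝ) (hX : X ∈ Stiefel m r) (hU : UniqCond Y r X) :
    ∃ k₀ : ℕ, (∀ k ≥ k₀, UniqCond (Yk k) r X) ∧
      ∀ Z : Matrix (Fin m) (Fin r) ℝ, IsProj Y X Z →
        ∀ Zk : ℕ → Matrix (Fin m) (Fin r) ℝ, (∀ k ≥ k₀, IsProj (Yk k) X (Zk k)) →
          Filter.Tendsto (fun k => fro (Zk k - Z)) Filter.atTop (nhds 0) := by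
  obtain ⟨huniq, hconv⟩ := stmt5_general hgap hYk hU
  obtain ⟨k₀, hk₀⟩ := eventually_atTop.1 huniq
  exact ⟨k₀, hk₀, fun Z hZ Zk hZk => hconv Z hZ Zk (eventually_atTop.2 ⟨k₀, hZk⟩)⟩
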